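/- Fix k ≥ 2. Assign to the variables of ℂ[x_0,…,x_k, y_0, y_1, y_2, A, B, L, M] the following weights in ℤ⁴ (coordinates ordered L, M, A, B, equal to four times the impartial T-weights): w(L) = (4,0,0,0), w(M) = (0,4,0,0), w(A) = (0,0,4,0), w(B) = (0,0,0,4), w(x_i) = (2i−1, 4i, 2k−2i−1, 4k−4i) for 0 ≤ i ≤ k, w(y_0) = (0, −4, 4k, 8k+4), w(y_1) = (1, 0, 2k+1, 4k+4), and w(y_2) = (2, 4, 2, 4). Then every one of the following polynomials is homogeneous for this ℤ⁴-grading: x_1·y_0 − A^{k−1}·B^{2k−1}·y_1 − x_0³·L; x_0·y_1 − A^k·B^{2k+1} − y_0·M; and y_2·x_i − A·B²·x_{i+1} − L·M²·x_{i−1} for 1 ≤ i ≤ k−1. -/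

import Mathlib

/-!
Each equation is a difference of three monomials, and monomials are homogeneous with weight the
corresponding sum of weights of variables (`isWeightedHomogeneous_xv` handles the `x_i`). By
`Homog.of_three_terms` it remains to compare these weights coordinatewise. The common weights are
`(1, 0, 6k-3, 12k)` and `(0, 0, 4k, 8k+4)` for the two bottom-cross equations, and
`(2i+1, 4i+4, 2k-2i+1, 4k-4i+4)` for the recurrence equation at `i`.
-/

/-!
T-weights for the diptych variety of type `[4,1]` with even `l = 2k`: the
bottom-cross and recurrence equations are homogeneous for the ℤ⁴-grading given
by (four times) the impartial coordinates.
-/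

open MvPolynomial

noncomputable section

namespace Dip41

/-- The ambient polynomial ring `ℂ[x_0,…,x_k,y₀,y₁,y₂,A,B,L,M]`:
`Sum.inr 0,…,6 = y₀, y₁, y₂, A, B, L, M`. -/
abbrev S (k : ℕ) : Type := MvPolynomial (Fin (k + 1) ⊕ Fin 7) ℂ

variable (k : ℕ)

/-- The variable `x_i` (junk value `0` out of range). -/
def xv (i : ℕ) : S k := if h : i ≤ k then X (Sum.inl ⟨i, by omega⟩) else 0

/-- The variable `y₀`. -/
def y0 : S k := X (Sum.inr 0)

/-- The variable `y₁`. -/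
def y1 : S k := X (Sum.inr 1)

/-- The variable `y₂`. -/
def y2 : S k := X (Sum.inr 2)

/-- The variable `A`. -/
def Av : S k := X (Sum.inr 3)

/-- The variable `B`. -/
def Bv : S k := X (Sum.inr 4)

/-- The variable `L`. -/
def Lv : S k := X (Sum.inr 5)

/-- The variable `M`. -/
def Mv : S k := X (Sum.inr 6)

/-- The ℤ⁴-valued weights (coordinates ordered `L, M, A, B`, equal to four
times the impartial T-weights): `w(x_i) = (2i-1, 4i, 2k-2i-1, 4k-4i)`,
`w(y₀) = (0, -4, 4k, 8k+4)`, `w(y₁) = (1, 0, 2k+1, 4k+4)`,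
`w(y₂) = (2, 4, 2, 4)`, and `L, M, A, B` have four times the standard basis
vectors as weights. -/
def w : (Fin (k + 1) ⊕ Fin 7) → (Fin 4 → ℤ)
  | Sum.inl i => ![2 * (i : ℤ) - 1, 4 * (i : ℤ),
      2 * (k : ℤ) - 2 * (i : ℤ) - 1, 4 * (k : ℤ) - 4 * (i : ℤ)]
  | Sum.inr 0 => ![0, -4, 4 * (k : ℤ), 8 * (k : ℤ) + 4]
  | Sum.inr 1 => ![1, 0, 2 * (k : ℤ) + 1, 4 * (k : ℤ) + 4]
  | Sum.inr 2 => ![2, 4, 2, 4]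
  | Sum.inr 3 => ![0, 0, 4, 0]
  | Sum.inr 4 => ![0, 0, 0, 4]
  | Sum.inr 5 => ![4, 0, 0, 0]
  | Sum.inr 6 => ![0, 4, 0, 0]

/-- A polynomial is homogeneous for the grading `w` if all its monomials have
the same weight. -/
def Homog (P : S k) : Prop := ∃ m : Fin 4 → ℤ, P.IsWeightedHomogeneous (w k) m

/-- `x_i` has the weight prescribed by `w`, including at out-of-range `i`, where `x_i = 0` is
homogeneous of every weight. -/
lemma isWeightedHomogeneous_xv (i : ℕ) :
    (xv k i).IsWeightedHomogeneous (w k) ![2 * (i : ℤ) - 1, 4 * (i : ℤ),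
      2 * (k : ℤ) - 2 * (i : ℤ) - 1, 4 * (k : ℤ) - 4 * (i : ℤ)] := by
  unfold xv
  split_ifs with h
  · exact isWeightedHomogeneous_X ℂ (w k) (Sum.inl ⟨i, by omega⟩)
  · exact isWeightedHomogeneous_zero ℂ (w k) _

variable {k} in
/-- A three-term relation is homogeneous as soon as its terms have equal weights. -/
lemma Homog.of_three_terms {P Q R : S k} {p q r : Fin 4 → ℤ}
    (hP : P.IsWeightedHomogeneous (w k) p) (hQ : Q.IsWeightedHomogeneous (w k) q)
    (hR : R.IsWeightedHomogeneous (w k) r) (hq : q = p) (hr : r = p) :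
    Homog k (P - Q - R) := by
  subst hq hr
  exact ⟨_, (weightedHomogeneousSubmodule ℂ (w k) _).sub_mem
    ((weightedHomogeneousSubmodule ℂ (w k) _).sub_mem hP hQ) hR⟩

end Dip41

open Dip41 in
/-- The two bottom-cross equations and the recurrence (pentagram) equations of
the diptych variety of type `[4,1]` with even `l = 2k` are homogeneous for the
ℤ⁴-grading of (four times) the impartial T-weights. -/
theorem dip41_equations_homogeneous (k : ℕ) (hk : 2 ≤ k) :
    Homog k (xv k 1 * y0 k - Av k ^ (k - 1) * Bv k ^ (2 * k - 1) * y1 k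
      - xv k 0 ^ 3 * Lv k) ∧
    Homog k (xv k 0 * y1 k - Av k ^ k * Bv k ^ (2 * k + 1) - y0 k * Mv k) ∧
    (∀ i : ℕ, 1 ≤ i → i ≤ k - 1 → Homog k
        (y2 k * xv k i - Av k * Bv k ^ 2 * xv k (i + 1)
          - Lv k * Mv k ^ 2 * xv k (i - 1))) := by
  have hx := isWeightedHomogeneous_xv k
  have h0 : (y0 k).IsWeightedHomogeneous (w k) _ := isWeightedHomogeneous_X ℂ (w k) _
  have h1 : (y1 k).IsWeightedHomogeneous (w k) _ := isWeightedHomogeneous_X ℂ (w k) _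
  have h2 : (y2 k).IsWeightedHomogeneous (w k) _ := isWeightedHomogeneous_X ℂ (w k) _
  have hA : (Av k).IsWeightedHomogeneous (w k) _ := isWeightedHomogeneous_X ℂ (w k) _
  have hB : (Bv k).IsWeightedHomogeneous (w k) _ := isWeightedHomogeneous_X ℂ (w k) _
  have hL : (Lv k).IsWeightedHomogeneous (w k) _ := isWeightedHomogeneous_X ℂ (w k) _
  have hM : (Mv k).IsWeightedHomogeneous (w k) _ := isWeightedHomogeneous_X ℂ (w k) _
  -- The lower bounds on `k` and `i` make the truncated subtractions in exponents and indices exact.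
  have e1 : ((k - 1 : ℕ) : ℤ) = k - 1 := by omega
  have e2 : ((2 * k - 1 : ℕ) : ℤ) = 2 * k - 1 := by omega
  refine ⟨?_, ?_, fun i hi _ => ?_⟩
  · refine Homog.of_three_terms ((hx 1).mul h0) (((hA.pow _).mul (hB.pow _)).mul h1)
      (((hx 0).pow 3).mul hL) ?_ ?_ <;>
    · ext j
      fin_cases j <;> simp [w, e1, e2] <;> ring
  · refine Homog.of_three_terms ((hx 0).mul h1) ((hA.pow _).mul (hB.pow _))
      (h0.mul hM) ?_ ?_ <;>
    · ext j
      fin_cases j <;> simp [w] <;> ring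
  · have e3 : ((i - 1 : ℕ) : ℤ) = i - 1 := by omega
    refine Homog.of_three_terms (h2.mul (hx i)) ((hA.mul (hB.pow 2)).mul (hx (i + 1)))
      ((hL.mul (hM.pow 2)).mul (hx (i - 1))) ?_ ?_ <;>
    · ext j
      fin_cases j <;> simp [w, e3] <;> ring
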